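/- arXiv:1505.07060 — 5 statements merged into one kernel-verified Lean document; each statement's English description precedes it below -/
import Mathlib

section
/- Let μ₁, μ₂, ζ be positive real numbers and let d be a real number with 0 ≤ d < 1, and suppose μ₂/√(1−d) < ζ and ζ < 2μ₁ − μ₂/√(1−d). Then there exists a constant C > 0 such that for all real numbers a ≥ 0 and b ≥ 0, −μ₁·a² + μ₂·a·b + (ζ/2)·a² − (ζ/2)·(1−d)·b² ≤ −C·(a² + b²). -/
/-!
Young's inequality with weight `√(1 - d)` bounds the cross term `μ₂ab` by
`|μ₂|/(2√(1 - d)) · (a² + (1 - d)b²)`. The form is then diagonal, and the two bounds on `ζ` are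
exactly the negativity of its coefficients: the lower one for `b²`, the upper one for `a²`.
-/

lemma mul_mul_le_abs_div_sqrt_mul_sq_add_mul_sq {w : ℝ} (hw : 0 < w) (m a b : ℝ) :
    m * a * b ≤ |m| / √w / 2 * (a ^ 2 + w * b ^ 2) :=
  calc m * a * b ≤ |m * a * b| := le_abs_self _
    _ = |m| / √w / 2 * (2 * |a| * (√w * |b|)) := by
      rw [abs_mul, abs_mul]
      field_simp
    _ ≤ |m| / √w / 2 * (|a| ^ 2 + (√w * |b|) ^ 2) := by
      gcongr
      exact two_mul_le_add_sq _ _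
    _ = |m| / √w / 2 * (a ^ 2 + w * b ^ 2) := by
      rw [mul_pow, Real.sq_sqrt hw.le, sq_abs, sq_abs]

lemma min_mul_add_le {R : Type*} [Semiring R] [LinearOrder R] [IsOrderedRing R] (p q : R)
    {x y : R} (hx : 0 ≤ x) (hy : 0 ≤ y) : min p q * (x + y) ≤ p * x + q * y := by
  rw [mul_add]
  gcongr
  · exact min_le_left p q
  · exact min_le_right p q

theorem quadratic_dissipativity_general {μ1 μ2 ζ d : ℝ} (hd : d < 1)
    (hζ_lower : |μ2| / √(1 - d) < ζ) (hζ_upper : ζ < 2 * μ1 - |μ2| / √(1 - d)) :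
    ∃ C : ℝ, 0 < C ∧ ∀ a b : ℝ,
      -μ1 * a ^ 2 + μ2 * a * b + (ζ / 2) * a ^ 2 - (ζ / 2) * (1 - d) * b ^ 2 ≤
        -C * (a ^ 2 + b ^ 2) := by
  have hw : 0 < 1 - d := sub_pos.mpr hd
  set k := |μ2| / √(1 - d)
  set p := μ1 - ζ / 2 - k / 2 with hp
  set q := (ζ - k) / 2 * (1 - d) with hq
  have p_pos : 0 < p := by linarith
  have q_pos : 0 < q := mul_pos (by linarith) hw
  refine ⟨min p q, lt_min p_pos q_pos, fun a b ↦ ?_⟩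
  have young : μ2 * a * b ≤ k / 2 * (a ^ 2 + (1 - d) * b ^ 2) :=
    mul_mul_le_abs_div_sqrt_mul_sq_add_mul_sq hw μ2 a b
  calc -μ1 * a ^ 2 + μ2 * a * b + (ζ / 2) * a ^ 2 - (ζ / 2) * (1 - d) * b ^ 2
      ≤ -μ1 * a ^ 2 + k / 2 * (a ^ 2 + (1 - d) * b ^ 2) + (ζ / 2) * a ^ 2
          - (ζ / 2) * (1 - d) * b ^ 2 := by gcongr
    _ = -(p * a ^ 2 + q * b ^ 2) := by rw [hp, hq]; ring
    _ ≤ -(min p q * (a ^ 2 + b ^ 2)) :=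
      neg_le_neg (min_mul_add_le p q (sq_nonneg a) (sq_nonneg b))
    _ = -min p q * (a ^ 2 + b ^ 2) := (neg_mul _ _).symm

/-- Quadratic-form dissipativity estimate for the boundary damping terms:
if `μ₂/√(1−d) < ζ < 2μ₁ − μ₂/√(1−d)`, then there is `C > 0` such that for all
`a, b ≥ 0`, `−μ₁a² + μ₂ab + (ζ/2)a² − (ζ/2)(1−d)b² ≤ −C(a² + b²)`. -/
theorem quadratic_dissipativity (μ1 μ2 ζ d : ℝ) (hμ1 : 0 < μ1) (hμ2 : 0 < μ2)
    (hζ : 0 < ζ) (hd0 : 0 ≤ d) (hd1 : d < 1)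
    (h1 : μ2 / Real.sqrt (1 - d) < ζ)
    (h2 : ζ < 2 * μ1 - μ2 / Real.sqrt (1 - d)) :
    ∃ C : ℝ, 0 < C ∧ ∀ a b : ℝ, 0 ≤ a → 0 ≤ b →
      -μ1 * a ^ 2 + μ2 * a * b + (ζ / 2) * a ^ 2 - (ζ / 2) * (1 - d) * b ^ 2 ≤
        -C * (a ^ 2 + b ^ 2) := by
  rw [← abs_of_pos hμ2] at h1 h2
  exact (quadratic_dissipativity_general hd1 h1 h2).imp
    fun _ hC ↦ ⟨hC.1, fun a b _ _ ↦ hC.2 a b⟩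
end

section
/- Let w : ℝ → ℝ be continuous with w(s) ≥ 0 for all s, and let τ : ℝ → [0,∞) be differentiable with τ′(t) ≤ 1 for all t. Then the function F(t) = τ(t)·∫₀¹ e^{−2τ(t)ρ} w(t − τ(t)ρ) dρ satisfies F(t) ≥ 0 and F′(t) ≤ −2·F(t) + w(t) for all t. -/
open intervalIntegral

/-!
Substituting `s = t - τ t * ρ` gives `F t = e^{-ct} ∫ s in (t - τ t)..t, e^{cs} w s`, so that the
delay enters only through an endpoint of the integral. Differentiating, the prefactor produces the
damping `-c F t`, the upper endpoint produces `w t`, and the lower endpoint produces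
`-(1 - τ' t) e^{-c τ t} w (t - τ t)`, which is nonpositive because `τ' t ≤ 1`.
-/

open MeasureTheory

section VectorValued

variable {E : Type*} [NormedAddCommGroup E] [NormedSpace ℝ E]

theorem hasDerivAt_integral_of_hasDerivAt_endpoints [CompleteSpace E] {f : ℝ → E}
    (hf : LocallyIntegrable f) {a b : ℝ → ℝ} {a' b' t : ℝ}
    (ha : HasDerivAt a a' t) (hb : HasDerivAt b b' t)
    (hfa : ContinuousAt f (a t)) (hfb : ContinuousAt f (b t)) :
    HasDerivAt (fun r => ∫ s in a r..b r, f s) (b' • f (b t) - a' • f (a t)) t := by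
  have hint : IntervalIntegrable f volume (a t) (b t) :=
    (hf.integrableOn_isCompact isCompact_uIcc).intervalIntegrable
  have hmeas (x : ℝ) : StronglyMeasurableAtFilter f (nhds x) :=
    hf.aestronglyMeasurable.stronglyMeasurableAtFilter
  exact (integral_hasFDerivAt hint (hmeas _) (hmeas _) hfa hfb).comp_hasDerivAt t (ha.prodMk hb)

/-- The delay functional `F(t) = τ(t) ∫₀¹ e^{-c τ(t) ρ} w(t - τ(t) ρ) dρ`, which records the history
of `w` over the delay window `[t - τ(t), t]` with exponential weight of rate `c`. The window is
rescaled to `[0, 1]`, and `τ(t)` may have either sign. -/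
noncomputable def weightedDelayFunctional (c : ℝ) (w : ℝ → E) (τ : ℝ → ℝ) (t : ℝ) : E :=
  τ t • ∫ ρ in (0 : ℝ)..1, Real.exp (-c * (τ t * ρ)) • w (t - τ t * ρ)

theorem weightedDelayFunctional_eq_exp_smul_integral (c : ℝ) (w : ℝ → E) (τ : ℝ → ℝ) (t : ℝ) :
    weightedDelayFunctional c w τ t =
      Real.exp (-c * t) • ∫ s in (t - τ t)..t, Real.exp (c * s) • w s := by
  have hweight (ρ : ℝ) :
      Real.exp (-c * (τ t * ρ)) = Real.exp (-c * t) * Real.exp (c * (t - τ t * ρ)) := by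
    rw [← Real.exp_add]
    ring_nf
  calc weightedDelayFunctional c w τ t
      = τ t • ∫ ρ in (0 : ℝ)..1,
          Real.exp (-c * t) • Real.exp (c * (t - τ t * ρ)) • w (t - τ t * ρ) := by
        simp only [weightedDelayFunctional, hweight, mul_smul]
    _ = Real.exp (-c * t) • τ t • ∫ ρ in (0 : ℝ)..1,
          Real.exp (c * (t - τ t * ρ)) • w (t - τ t * ρ) := by
        rw [intervalIntegral.integral_smul, smul_comm]
    _ = Real.exp (-c * t) • ∫ s in (t - τ t)..t, Real.exp (c * s) • w s := by
        rw [smul_integral_comp_sub_mul (fun s => Real.exp (c * s) • w s), mul_one, mul_zero,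
          sub_zero]

theorem hasDerivAt_weightedDelayFunctional [CompleteSpace E] (c : ℝ) {w : ℝ → E}
    (hw : LocallyIntegrable w) {τ : ℝ → ℝ} {τ' t : ℝ} (hτ : HasDerivAt τ τ' t)
    (hwt : ContinuousAt w t) (hwτ : ContinuousAt w (t - τ t)) :
    HasDerivAt (weightedDelayFunctional c w τ)
      (-c • weightedDelayFunctional c w τ t + w t
        - (1 - τ') • Real.exp (-c * τ t) • w (t - τ t)) t := by
  have hexp : Continuous fun s => Real.exp (c * s) := by fun_prop
  have hintegral : HasDerivAt (fun r => ∫ s in (r - τ r)..r, Real.exp (c * s) • w s)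
      ((1 : ℝ) • Real.exp (c * t) • w t
        - (1 - τ') • Real.exp (c * (t - τ t)) • w (t - τ t)) t :=
    hasDerivAt_integral_of_hasDerivAt_endpoints (hw.continuous_smul hexp)
      ((hasDerivAt_id t).sub hτ) (hasDerivAt_id t) (hexp.continuousAt.smul hwτ)
      (hexp.continuousAt.smul hwt)
  have hprefactor : HasDerivAt (fun r => Real.exp (-c * r)) (Real.exp (-c * t) * -c) t :=
    (hasDerivAt_const_mul (-c)).exp
  have hupper : Real.exp (-c * t) * Real.exp (c * t) = 1 := by
    rw [← Real.exp_add, neg_mul, neg_add_cancel, Real.exp_zero]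
  have hlower : Real.exp (-c * t) * Real.exp (c * (t - τ t)) = Real.exp (-c * τ t) := by
    rw [← Real.exp_add]
    ring_nf
  rw [funext (weightedDelayFunctional_eq_exp_smul_integral c w τ)]
  refine (hprefactor.smul hintegral).congr_deriv ?_
  rw [one_smul, smul_sub, smul_smul, hupper, one_smul, smul_comm _ (1 - τ'),
    smul_smul (Real.exp (-c * t)), hlower, mul_comm (Real.exp (-c * t)) (-c), mul_smul]
  abel

end VectorValued

theorem weightedDelayFunctional_nonneg (c : ℝ) {w : ℝ → ℝ} (hw : ∀ s, 0 ≤ w s) {τ : ℝ → ℝ}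
    {t : ℝ} (hτ : 0 ≤ τ t) : 0 ≤ weightedDelayFunctional c w τ t :=
  mul_nonneg hτ <| integral_nonneg zero_le_one fun _ _ => mul_nonneg (Real.exp_nonneg _) (hw _)

theorem weighted_delay_functional_ineq_general (c : ℝ) {w : ℝ → ℝ} (hw : LocallyIntegrable w)
    (hw0 : ∀ s, 0 ≤ w s) (τ : ℝ → ℝ) :
    (∀ t, 0 ≤ τ t → 0 ≤ weightedDelayFunctional c w τ t) ∧
    (∀ t, ContinuousAt w t → ContinuousAt w (t - τ t) → DifferentiableAt ℝ τ t →
      deriv τ t ≤ 1 →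
      DifferentiableAt ℝ (weightedDelayFunctional c w τ) t ∧
        deriv (weightedDelayFunctional c w τ) t ≤
          -c * weightedDelayFunctional c w τ t + w t) := by
  refine ⟨fun t => weightedDelayFunctional_nonneg c hw0, fun t hwt hwτ hτ hτ' => ?_⟩
  have hF := hasDerivAt_weightedDelayFunctional c hw hτ.hasDerivAt hwt hwτ
  have hlower : 0 ≤ (1 - deriv τ t) * (Real.exp (-c * τ t) * w (t - τ t)) :=
    mul_nonneg (sub_nonneg.2 hτ') (mul_nonneg (Real.exp_nonneg _) (hw0 _))
  exact ⟨hF.differentiableAt, hF.deriv.trans_le (sub_le_self _ hlower)⟩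

/-- Damped differential inequality for the exponentially weighted delay functional:
if `w ≥ 0` and `τ ≥ 0` with `τ′ ≤ 1`, then
`F(t) = τ(t)·∫₀¹ e^{−2τ(t)ρ} w(t − τ(t)ρ) dρ` satisfies `F ≥ 0` and
`F′(t) ≤ −2F(t) + w(t)`. -/
theorem weighted_delay_functional_ineq (w : ℝ → ℝ) (hw : Continuous w)
    (hw0 : ∀ s, 0 ≤ w s) (τ : ℝ → ℝ) (hτ0 : ∀ t, 0 ≤ τ t)
    (hτ : Differentiable ℝ τ) (hτ' : ∀ t, deriv τ t ≤ 1) :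
    (∀ t : ℝ, 0 ≤ τ t * ∫ ρ in (0:ℝ)..1, Real.exp (-2 * (τ t * ρ)) * w (t - τ t * ρ)) ∧
    (∀ t : ℝ,
      deriv (fun r => τ r * ∫ ρ in (0:ℝ)..1, Real.exp (-2 * (τ r * ρ)) * w (r - τ r * ρ)) t ≤
        -2 * (τ t * ∫ ρ in (0:ℝ)..1, Real.exp (-2 * (τ t * ρ)) * w (t - τ t * ρ)) + w t) := by
  obtain ⟨hnonneg, hderiv⟩ :=
    weighted_delay_functional_ineq_general 2 hw.locallyIntegrable hw0 τ
  exact ⟨fun t => hnonneg t (hτ0 t),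
    fun t => (hderiv t hw.continuousAt hw.continuousAt (hτ t) (hτ' t)).2⟩
end

section
/- Let H be a real inner product space, let g : [0,∞) → ℝ be continuous with g(s) ≥ 0 for all s and ∫₀^∞ g(s) ds = 1 − l for some 0 < l ≤ 1, and let f : [0,∞) → H be continuous. Then for every t ≥ 0 and every δ > 0, ⟨f(t), ∫₀ᵗ g(t−s)·f(s) ds⟩ ≤ (δ + 1 − l)·‖f(t)‖² + ((1 − l)/(4δ))·∫₀ᵗ g(t−s)·‖f(t) − f(s)‖² ds. -/
open intervalIntegral RealInnerProductSpace

/-!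
Since `f s` is within `‖a - f s‖` of `a = f t`, the left side is at most
`‖a‖ * (M * ‖a‖ + ∫ w * ‖a - f‖)` for the weight `w s = g (t - s)` of total mass `M ≤ 1 - l`.
Young's inequality splits the product `‖a‖ * ∫ w * ‖a - f‖`, and Cauchy–Schwarz for the measure
with density `w` then gives `(∫ w * ‖a - f‖) ^ 2 ≤ M * ∫ w * ‖a - f‖ ^ 2`. Applying Young after
integrating avoids dividing by `M`, which may vanish.
-/

open MeasureTheory

section WeightedIntegral

variable {α : Type*} [MeasurableSpace α] {μ : Measure α} {w : α → ℝ}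

lemma integrable_mul_of_integrable_mul_sq {φ : α → ℝ} (hw₀ : 0 ≤ᵐ[μ] w) (hw : Integrable w μ)
    (hφ : AEStronglyMeasurable φ μ) (hwφ : Integrable (fun x ↦ w x * φ x ^ 2) μ) :
    Integrable (fun x ↦ w x * φ x) μ := by
  refine (hw.add hwφ).mono' (hw.aestronglyMeasurable.mul hφ) ?_
  filter_upwards [hw₀] with x hx
  have abs_le : |φ x| ≤ 1 + φ x ^ 2 := by
    rw [← sq_abs]
    nlinarith [sq_nonneg (|φ x| - 1)]
  calc ‖w x * φ x‖ = w x * |φ x| := by rw [norm_mul, Real.norm_of_nonneg hx, Real.norm_eq_abs]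
    _ ≤ w x * (1 + φ x ^ 2) := mul_le_mul_of_nonneg_left abs_le hx
    _ = w x + w x * φ x ^ 2 := by ring

lemma sq_integral_mul_le_integral_mul_integral_mul_sq {φ : α → ℝ} (hw₀ : 0 ≤ᵐ[μ] w)
    (hw : Integrable w μ) (hφ : AEStronglyMeasurable φ μ)
    (hwφ : Integrable (fun x ↦ w x * φ x ^ 2) μ) :
    (∫ x, w x * φ x ∂μ) ^ 2 ≤ (∫ x, w x ∂μ) * ∫ x, w x * φ x ^ 2 ∂μ := by
  have hwφ₁ := integrable_mul_of_integrable_mul_sq hw₀ hw hφ hwφ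
  have quadratic_nonneg (c : ℝ) :
      0 ≤ (∫ x, w x ∂μ) * (c * c) + (-2 * ∫ x, w x * φ x ∂μ) * c + ∫ x, w x * φ x ^ 2 ∂μ := by
    calc 0 ≤ ∫ x, w x * (c - φ x) ^ 2 ∂μ :=
          integral_nonneg_of_ae (hw₀.mono fun x hx ↦ mul_nonneg hx (sq_nonneg _))
      _ = ∫ x, w x * (c * c) + w x * φ x * (-2 * c) + w x * φ x ^ 2 ∂μ := by
          congr with x
          ring
      _ = _ := by
          have affine_integrable : Integrable (fun x ↦ w x * (c * c) + w x * φ x * (-2 * c)) μ :=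
            (hw.mul_const _).add (hwφ₁.mul_const _)
          rw [integral_add affine_integrable hwφ,
            integral_add (hw.mul_const _) (hwφ₁.mul_const _),
            MeasureTheory.integral_mul_const, MeasureTheory.integral_mul_const]
          ring
  have discrim_nonpos := discrim_le_zero quadratic_nonneg
  rw [discrim] at discrim_nonpos
  linarith

lemma norm_integral_smul_le_add_integral_norm_sub {E : Type*} [NormedAddCommGroup E]
    [NormedSpace ℝ E] {f : α → E} (a : E) (hw₀ : 0 ≤ᵐ[μ] w) (hw : Integrable w μ)
    (hwf : Integrable (fun x ↦ w x * ‖a - f x‖) μ) :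
    ‖∫ x, w x • f x ∂μ‖ ≤ (∫ x, w x ∂μ) * ‖a‖ + ∫ x, w x * ‖a - f x‖ ∂μ := by
  calc ‖∫ x, w x • f x ∂μ‖ ≤ ∫ x, w x * ‖a‖ + w x * ‖a - f x‖ ∂μ := by
        refine norm_integral_le_of_norm_le ((hw.mul_const _).add hwf) ?_
        filter_upwards [hw₀] with x hx
        rw [norm_smul, Real.norm_of_nonneg hx, ← mul_add]
        exact mul_le_mul_of_nonneg_left (norm_le_norm_add_norm_sub a (f x)) hx
    _ = _ := by rw [integral_add (hw.mul_const _) hwf, MeasureTheory.integral_mul_const]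

theorem real_inner_integral_smul_le {H : Type*} [NormedAddCommGroup H] [InnerProductSpace ℝ H]
    {f : α → H} (a : H) {δ : ℝ} (hδ : 0 < δ) (hw₀ : 0 ≤ᵐ[μ] w) (hw : Integrable w μ)
    (hf : AEStronglyMeasurable f μ) (hwf : Integrable (fun x ↦ w x * ‖a - f x‖ ^ 2) μ) :
    ⟪a, ∫ x, w x • f x ∂μ⟫ ≤ (δ + ∫ x, w x ∂μ) * ‖a‖ ^ 2 +
      (∫ x, w x ∂μ) / (4 * δ) * ∫ x, w x * ‖a - f x‖ ^ 2 ∂μ := by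
  have hdist : AEStronglyMeasurable (fun x ↦ ‖a - f x‖) μ :=
    (aestronglyMeasurable_const.sub hf).norm
  set M := ∫ x, w x ∂μ
  set D := ∫ x, w x * ‖a - f x‖ ∂μ
  -- Bounding the norm, rather than moving `⟪a, ·⟫` under the integral, also covers incomplete `H`,
  -- where the Bochner integral is `0` by convention.
  have norm_le : ‖∫ x, w x • f x ∂μ‖ ≤ M * ‖a‖ + D :=
    norm_integral_smul_le_add_integral_norm_sub a hw₀ hw
      (integrable_mul_of_integrable_mul_sq hw₀ hw hdist hwf)
  have young : ‖a‖ * D ≤ δ * ‖a‖ ^ 2 + D ^ 2 / (4 * δ) := by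
    have h := two_mul_le_add_mul_sq (a := ‖a‖) (b := D) (mul_pos two_pos hδ)
    have : (2 * δ)⁻¹ * D ^ 2 = 2 * (D ^ 2 / (4 * δ)) := by field
    linarith
  calc ⟪a, ∫ x, w x • f x ∂μ⟫ ≤ ‖a‖ * ‖∫ x, w x • f x ∂μ‖ := real_inner_le_norm _ _
    _ ≤ ‖a‖ * (M * ‖a‖ + D) := by gcongr
    _ = M * ‖a‖ ^ 2 + ‖a‖ * D := by ring
    _ ≤ M * ‖a‖ ^ 2 + (δ * ‖a‖ ^ 2 + D ^ 2 / (4 * δ)) := by gcongr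
    _ ≤ M * ‖a‖ ^ 2 + (δ * ‖a‖ ^ 2 + M * (∫ x, w x * ‖a - f x‖ ^ 2 ∂μ) / (4 * δ)) := by
        gcongr
        exact sq_integral_mul_le_integral_mul_integral_mul_sq hw₀ hw hdist hwf
    _ = _ := by ring

end WeightedIntegral

lemma intervalIntegral_le_setIntegral_Ioi {g : ℝ → ℝ} {a b : ℝ} (hab : a ≤ b)
    (hg₀ : ∀ s ∈ Set.Ioi a, 0 ≤ g s) (hg : IntegrableOn g (Set.Ioi a)) :
    ∫ s in a..b, g s ≤ ∫ s in Set.Ioi a, g s := by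
  rw [integral_of_le hab]
  exact setIntegral_mono_set hg (ae_restrict_of_forall_mem measurableSet_Ioi hg₀)
    Set.Ioc_subset_Ioi_self.eventuallyLE

theorem convolution_inner_estimate_general {H : Type*} [NormedAddCommGroup H]
    [InnerProductSpace ℝ H] {g : ℝ → ℝ} {f : ℝ → H} (a : H) {t m δ : ℝ} (ht : 0 ≤ t) (hδ : 0 < δ)
    (hg₀ : ∀ s ∈ Set.Icc 0 t, 0 ≤ g s) (hg : IntervalIntegrable g volume 0 t)
    (hm : ∫ s in 0..t, g s ≤ m) (hf : AEStronglyMeasurable f (volume.restrict (Set.Ioc 0 t)))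
    (hgf : IntervalIntegrable (fun s ↦ g (t - s) * ‖a - f s‖ ^ 2) volume 0 t) :
    ⟪a, ∫ s in 0..t, g (t - s) • f s⟫ ≤
      (δ + m) * ‖a‖ ^ 2 + m / (4 * δ) * ∫ s in 0..t, g (t - s) * ‖a - f s‖ ^ 2 := by
  have kernel_nonneg : ∀ s ∈ Set.Icc 0 t, 0 ≤ g (t - s) := fun s hs ↦
    hg₀ _ ⟨sub_nonneg.2 hs.2, sub_le_self t hs.1⟩
  have kernel_integrable : IntervalIntegrable (fun s ↦ g (t - s)) volume 0 t := by
    simpa only [sub_zero, sub_self] using (hg.comp_sub_left t).symm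
  have kernel_mass_le : ∫ s in 0..t, g (t - s) ≤ m := by
    rwa [integral_comp_sub_left, sub_self, sub_zero]
  have deviation_nonneg : 0 ≤ ∫ s in 0..t, g (t - s) * ‖a - f s‖ ^ 2 :=
    integral_nonneg ht fun s hs ↦ mul_nonneg (kernel_nonneg s hs) (sq_nonneg _)
  calc ⟪a, ∫ s in 0..t, g (t - s) • f s⟫
      ≤ (δ + ∫ s in 0..t, g (t - s)) * ‖a‖ ^ 2 +
        (∫ s in 0..t, g (t - s)) / (4 * δ) * ∫ s in 0..t, g (t - s) * ‖a - f s‖ ^ 2 := by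
        simp only [integral_of_le ht]
        exact real_inner_integral_smul_le a hδ
          (ae_restrict_of_forall_mem measurableSet_Ioc fun s hs ↦
            kernel_nonneg s (Set.Ioc_subset_Icc_self hs))
          kernel_integrable.1 hf hgf.1
    _ ≤ _ := by gcongr

/-- Estimate for the convolution term in the derivative of the Lyapunov functional ψ:
`⟨f(t), ∫₀ᵗ g(t−s) f(s) ds⟩ ≤ (δ + 1 − l)‖f(t)‖² + ((1−l)/(4δ))·∫₀ᵗ g(t−s)‖f(t)−f(s)‖² ds`. -/
theorem convolution_inner_estimate {H : Type*} [NormedAddCommGroup H] [InnerProductSpace ℝ H]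
    (g : ℝ → ℝ) (hgc : ContinuousOn g (Set.Ici 0)) (hg0 : ∀ s, 0 ≤ s → 0 ≤ g s)
    (l : ℝ) (hl0 : 0 < l) (hl1 : l ≤ 1)
    (hgint : MeasureTheory.IntegrableOn g (Set.Ioi 0))
    (hgval : ∫ s in Set.Ioi (0:ℝ), g s = 1 - l)
    (f : ℝ → H) (hf : Continuous f) (t : ℝ) (ht : 0 ≤ t) (δ : ℝ) (hδ : 0 < δ) :
    ⟪f t, ∫ s in (0:ℝ)..t, g (t - s) • f s⟫ ≤
      (δ + 1 - l) * ‖f t‖ ^ 2 +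
        ((1 - l) / (4 * δ)) * ∫ s in (0:ℝ)..t, g (t - s) * ‖f t - f s‖ ^ 2 := by
  have hg : IntervalIntegrable g volume 0 t :=
    (intervalIntegrable_iff_integrableOn_Ioc_of_le ht).2 (hgint.mono_set Set.Ioc_subset_Ioi_self)
  have hm := (intervalIntegral_le_setIntegral_Ioi ht (fun s hs ↦ hg0 s hs.le) hgint).trans_eq hgval
  simpa only [add_sub_assoc] using convolution_inner_estimate_general (f t) ht hδ
    (fun s hs ↦ hg0 s hs.1) hg hm hf.aestronglyMeasurable
    (by simpa using (hg.comp_sub_left t).symm.mul_continuousOn (by fun_prop))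
end

section
/- Let H be a real inner product space, let g : [0,∞) → ℝ be continuous with g(s) ≥ 0 for all s and ∫₀^∞ g(s) ds = 1 − l for some 0 < l ≤ 1, and let f : [0,∞) → H be continuous. Then for every t ≥ 0 and every δ > 0, −⟨∫₀ᵗ g(t−s)·f(s) ds, ∫₀ᵗ g(t−s)·(f(t) − f(s)) ds⟩ ≤ 2δ(1−l)²·‖f(t)‖² + (2δ + 1/(4δ))·(1−l)·∫₀ᵗ g(t−s)·‖f(t) − f(s)‖² ds. -/
open intervalIntegral RealInnerProductSpace

/-!
The values `g (t - s)` are the density of a finite measure on `(0, t]`, of mass at most `1 - l`.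
Young's inequality splits the inner product into the squared norms of the two integrals.
Cauchy–Schwarz bounds the squared norm of an integral by the mass times the integral of the squared
norm, and in the first factor `‖f s‖² ≤ 2‖f t‖² + 2‖f t - f s‖²`. Estimating `‖f s‖²` under the
integral sign, rather than expanding the integral of `f t - f s`, avoids any appeal to the
completeness of `H`.
-/

theorem neg_real_inner_le_mul_norm_sq_add {E : Type*} [SeminormedAddCommGroup E]
    [InnerProductSpace ℝ E] (x y : E) {δ : ℝ} (hδ : 0 < δ) :
    -⟪x, y⟫ ≤ δ * ‖x‖ ^ 2 + 1 / (4 * δ) * ‖y‖ ^ 2 := by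
  have hsq : 0 ≤ ‖(2 * δ) • x + y‖ ^ 2 / (4 * δ) := by positivity
  have hexpand : ‖(2 * δ) • x + y‖ ^ 2 / (4 * δ) =
      δ * ‖x‖ ^ 2 + ⟪x, y⟫ + 1 / (4 * δ) * ‖y‖ ^ 2 := by
    rw [norm_add_sq_real, norm_smul_of_nonneg (by positivity), real_inner_smul_left]
    field_simp
    ring
  linarith

theorem norm_sq_le_two_mul_norm_sq_add_norm_sub_sq {E : Type*} [SeminormedAddCommGroup E]
    (x y : E) : ‖y‖ ^ 2 ≤ 2 * (‖x‖ ^ 2 + ‖x - y‖ ^ 2) :=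
  calc ‖y‖ ^ 2 ≤ (‖x‖ + ‖x - y‖) ^ 2 := by
        gcongr
        simpa using norm_sub_le x (x - y)
    _ ≤ 2 * (‖x‖ ^ 2 + ‖x - y‖ ^ 2) := add_sq_le

section FiniteMeasure

open MeasureTheory

variable {α E : Type*} [MeasurableSpace α] {μ : Measure α} [IsFiniteMeasure μ]

theorem sq_integral_le_measureReal_univ_mul_integral_sq {u : α → ℝ} (hu : MemLp u 2 μ) :
    (∫ a, u a ∂μ) ^ 2 ≤ μ.real Set.univ * ∫ a, u a ^ 2 ∂μ := by
  have hu_int : Integrable u μ := hu.integrable one_le_two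
  have quadratic_nonneg (c : ℝ) : 0 ≤ μ.real Set.univ * (c * c) + (-2 * ∫ a, u a ∂μ) * c +
      ∫ a, u a ^ 2 ∂μ :=
    calc 0 ≤ ∫ a, (c * c + -2 * c * u a + u a ^ 2) ∂μ :=
          integral_nonneg fun a => by
            simpa only [Pi.zero_apply] using (sq_nonneg (c - u a)).trans_eq (by ring)
      _ = μ.real Set.univ * (c * c) + (-2 * ∫ a, u a ∂μ) * c + ∫ a, u a ^ 2 ∂μ := by
          have hlin : Integrable (fun a => -2 * c * u a) μ := hu_int.const_mul _
          have haff : Integrable (fun a => c * c + -2 * c * u a) μ :=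
            (integrable_const _).add hlin
          rw [MeasureTheory.integral_add haff hu.integrable_sq,
            MeasureTheory.integral_add (integrable_const _) hlin,
            MeasureTheory.integral_const, MeasureTheory.integral_const_mul, smul_eq_mul]
          ring
  have hdiscrim := discrim_le_zero quadratic_nonneg
  rw [discrim] at hdiscrim
  linarith

theorem norm_integral_sq_le_measureReal_univ_mul_integral_norm_sq [NormedAddCommGroup E]
    [NormedSpace ℝ E] {h : α → E} (hh : MemLp h 2 μ) :
    ‖∫ a, h a ∂μ‖ ^ 2 ≤ μ.real Set.univ * ∫ a, ‖h a‖ ^ 2 ∂μ :=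
  calc ‖∫ a, h a ∂μ‖ ^ 2 ≤ (∫ a, ‖h a‖ ∂μ) ^ 2 := by
        gcongr
        exact norm_integral_le_integral_norm h
    _ ≤ μ.real Set.univ * ∫ a, ‖h a‖ ^ 2 ∂μ :=
        sq_integral_le_measureReal_univ_mul_integral_sq hh.norm

theorem integral_norm_sq_le_add_integral_norm_sub_sq [NormedAddCommGroup E] {h : α → E}
    (hh : MemLp h 2 μ) (x : E) :
    ∫ a, ‖h a‖ ^ 2 ∂μ ≤ 2 * (μ.real Set.univ * ‖x‖ ^ 2 + ∫ a, ‖x - h a‖ ^ 2 ∂μ) := by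
  have hsub : Integrable (fun a => ‖x - h a‖ ^ 2) μ :=
    ((memLp_const x).sub hh).integrable_norm_pow two_ne_zero
  calc ∫ a, ‖h a‖ ^ 2 ∂μ ≤ ∫ a, 2 * (‖x‖ ^ 2 + ‖x - h a‖ ^ 2) ∂μ :=
        integral_mono (hh.integrable_norm_pow two_ne_zero)
          (((integrable_const _).add hsub).const_mul 2)
          fun a => norm_sq_le_two_mul_norm_sq_add_norm_sub_sq x (h a)
    _ = 2 * (μ.real Set.univ * ‖x‖ ^ 2 + ∫ a, ‖x - h a‖ ^ 2 ∂μ) := by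
        rw [MeasureTheory.integral_const_mul, MeasureTheory.integral_add (integrable_const _) hsub,
          MeasureTheory.integral_const, smul_eq_mul]

theorem neg_inner_integral_integral_sub_le [NormedAddCommGroup E] [InnerProductSpace ℝ E]
    {h : α → E} (hh : MemLp h 2 μ) (x : E) {δ : ℝ} (hδ : 0 < δ) :
    -⟪∫ a, h a ∂μ, ∫ a, (x - h a) ∂μ⟫ ≤ 2 * δ * μ.real Set.univ ^ 2 * ‖x‖ ^ 2 +
      (2 * δ + 1 / (4 * δ)) * μ.real Set.univ * ∫ a, ‖x - h a‖ ^ 2 ∂μ := by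
  set m := μ.real Set.univ
  set K := ∫ a, ‖x - h a‖ ^ 2 ∂μ
  have hfst : ‖∫ a, h a ∂μ‖ ^ 2 ≤ m * (2 * (m * ‖x‖ ^ 2 + K)) :=
    (norm_integral_sq_le_measureReal_univ_mul_integral_norm_sq hh).trans <|
      mul_le_mul_of_nonneg_left (integral_norm_sq_le_add_integral_norm_sub_sq hh x)
        measureReal_nonneg
  have hsnd : ‖∫ a, (x - h a) ∂μ‖ ^ 2 ≤ m * K :=
    norm_integral_sq_le_measureReal_univ_mul_integral_norm_sq ((memLp_const x).sub hh)
  calc -⟪∫ a, h a ∂μ, ∫ a, (x - h a) ∂μ⟫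
      ≤ δ * ‖∫ a, h a ∂μ‖ ^ 2 + 1 / (4 * δ) * ‖∫ a, (x - h a) ∂μ‖ ^ 2 :=
        neg_real_inner_le_mul_norm_sq_add _ _ hδ
    _ ≤ δ * (m * (2 * (m * ‖x‖ ^ 2 + K))) + 1 / (4 * δ) * (m * K) := by gcongr
    _ = 2 * δ * m ^ 2 * ‖x‖ ^ 2 + (2 * δ + 1 / (4 * δ)) * m * K := by ring

end FiniteMeasure

section MemoryMeasure

open MeasureTheory

variable {E : Type*} [NormedAddCommGroup E] {g : ℝ → ℝ} {t : ℝ}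

/-- The measure `g (t - s) ds` on `(0, t]`, against which a memory term with relaxation kernel `g`
integrates the history. Negative values of `g` are truncated to `0`. -/
noncomputable def memoryMeasure (g : ℝ → ℝ) (t : ℝ) : Measure ℝ :=
  (volume.restrict (Set.Ioc 0 t)).withDensity fun s => ENNReal.ofReal (g (t - s))

theorem integrableOn_Ioc_comp_sub_left (hg : IntervalIntegrable g volume 0 t) (ht : 0 ≤ t) :
    IntegrableOn (fun s => g (t - s)) (Set.Ioc 0 t) := by
  have hcomp := hg.comp_sub_left t
  rw [sub_zero, sub_self] at hcomp
  exact (intervalIntegrable_iff_integrableOn_Ioc_of_le ht).1 hcomp.symm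

theorem isFiniteMeasure_memoryMeasure (hg : IntervalIntegrable g volume 0 t) (ht : 0 ≤ t) :
    IsFiniteMeasure (memoryMeasure g t) :=
  isFiniteMeasure_withDensity_ofReal (integrableOn_Ioc_comp_sub_left hg ht).hasFiniteIntegral

theorem integral_memoryMeasure [NormedSpace ℝ E] (hg : IntervalIntegrable g volume 0 t)
    (hg0 : ∀ s ∈ Set.Icc 0 t, 0 ≤ g s) (ht : 0 ≤ t) (h : ℝ → E) :
    ∫ s, h s ∂memoryMeasure g t = ∫ s in (0 : ℝ)..t, g (t - s) • h s := by
  rw [memoryMeasure, integral_withDensity_eq_integral_toReal_smul₀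
    (integrableOn_Ioc_comp_sub_left hg ht).aestronglyMeasurable.aemeasurable.ennreal_ofReal
    (.of_forall fun _ => ENNReal.ofReal_lt_top), integral_of_le ht]
  refine setIntegral_congr_fun measurableSet_Ioc fun s hs => ?_
  simp only [ENNReal.toReal_ofReal (hg0 (t - s) ⟨sub_nonneg.2 hs.2, sub_le_self t hs.1.le⟩)]

theorem measureReal_univ_memoryMeasure (hg : IntervalIntegrable g volume 0 t)
    (hg0 : ∀ s ∈ Set.Icc 0 t, 0 ≤ g s) (ht : 0 ≤ t) :
    (memoryMeasure g t).real Set.univ = ∫ s in (0 : ℝ)..t, g s := by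
  simpa using integral_memoryMeasure hg hg0 ht fun _ => (1 : ℝ)

theorem memLp_memoryMeasure_of_continuousOn (hg : IntervalIntegrable g volume 0 t) (ht : 0 ≤ t)
    {f : ℝ → E} (hf : ContinuousOn f (Set.Icc 0 t)) (p : ENNReal) :
    MemLp f p (memoryMeasure g t) := by
  have := isFiniteMeasure_memoryMeasure hg ht
  have hac : memoryMeasure g t ≪ volume.restrict (Set.Ioc 0 t) :=
    withDensity_absolutelyContinuous _ _
  obtain ⟨C, hC⟩ := isCompact_Icc.exists_bound_of_continuousOn hf
  have hmeas : AEStronglyMeasurable f (volume.restrict (Set.Ioc 0 t)) :=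
    (hf.mono Set.Ioc_subset_Icc_self).aestronglyMeasurable measurableSet_Ioc
  have hbound : ∀ᵐ s ∂volume.restrict (Set.Ioc 0 t), ‖f s‖ ≤ C :=
    ae_restrict_of_forall_mem measurableSet_Ioc fun s hs => hC s (Set.Ioc_subset_Icc_self hs)
  exact .of_bound (hmeas.mono_ac hac) C (hac.ae_le hbound)

theorem double_convolution_estimate_general [InnerProductSpace ℝ E]
    (hg : IntervalIntegrable g volume 0 t) (hg0 : ∀ s ∈ Set.Icc 0 t, 0 ≤ g s) {M : ℝ}
    (hgM : ∫ s in (0 : ℝ)..t, g s ≤ M) {f : ℝ → E} (hf : ContinuousOn f (Set.Icc 0 t))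
    (ht : 0 ≤ t) {δ : ℝ} (hδ : 0 < δ) :
    -⟪∫ s in (0 : ℝ)..t, g (t - s) • f s, ∫ s in (0 : ℝ)..t, g (t - s) • (f t - f s)⟫ ≤
      2 * δ * M ^ 2 * ‖f t‖ ^ 2 +
        (2 * δ + 1 / (4 * δ)) * M * ∫ s in (0 : ℝ)..t, g (t - s) * ‖f t - f s‖ ^ 2 := by
  have := isFiniteMeasure_memoryMeasure hg ht
  have hmass : (memoryMeasure g t).real Set.univ ≤ M :=
    (measureReal_univ_memoryMeasure hg hg0 ht).trans_le hgM
  simp only [← smul_eq_mul (g _), ← integral_memoryMeasure hg hg0 ht]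
  refine (neg_inner_integral_integral_sub_le
    (memLp_memoryMeasure_of_continuousOn hg ht hf 2) (f t) hδ).trans ?_
  gcongr

end MemoryMeasure

theorem intervalIntegral_le_integral_Ioi {g : ℝ → ℝ} {a b : ℝ} (hab : a ≤ b)
    (hg : MeasureTheory.IntegrableOn g (Set.Ioi a)) (hg0 : ∀ s ∈ Set.Ioi a, 0 ≤ g s) :
    ∫ s in a..b, g s ≤ ∫ s in Set.Ioi a, g s := by
  rw [integral_of_le hab]
  exact MeasureTheory.setIntegral_mono_set hg
    (MeasureTheory.ae_restrict_of_forall_mem measurableSet_Ioi hg0)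
    Set.Ioc_subset_Ioi_self.eventuallyLE

/-- Estimate for the double convolution term in the derivative of the Lyapunov
functional φ:
`−⟨∫₀ᵗ g(t−s) f(s) ds, ∫₀ᵗ g(t−s)(f(t) − f(s)) ds⟩ ≤ 2δ(1−l)²‖f(t)‖²
  + (2δ + 1/(4δ))(1−l)·∫₀ᵗ g(t−s)‖f(t)−f(s)‖² ds`. -/
theorem double_convolution_estimate {H : Type*} [NormedAddCommGroup H] [InnerProductSpace ℝ H]
    (g : ℝ → ℝ) (hgc : ContinuousOn g (Set.Ici 0)) (hg0 : ∀ s, 0 ≤ s → 0 ≤ g s)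
    (l : ℝ) (hl0 : 0 < l) (hl1 : l ≤ 1)
    (hgint : MeasureTheory.IntegrableOn g (Set.Ioi 0))
    (hgval : ∫ s in Set.Ioi (0:ℝ), g s = 1 - l)
    (f : ℝ → H) (hf : Continuous f) (t : ℝ) (ht : 0 ≤ t) (δ : ℝ) (hδ : 0 < δ) :
    -⟪∫ s in (0:ℝ)..t, g (t - s) • f s, ∫ s in (0:ℝ)..t, g (t - s) • (f t - f s)⟫ ≤
      2 * δ * (1 - l) ^ 2 * ‖f t‖ ^ 2 +
        (2 * δ + 1 / (4 * δ)) * (1 - l) *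
          ∫ s in (0:ℝ)..t, g (t - s) * ‖f t - f s‖ ^ 2 := by
  have hmass : ∫ s in (0 : ℝ)..t, g s ≤ 1 - l :=
    (intervalIntegral_le_integral_Ioi ht hgint fun s hs => hg0 s (le_of_lt hs)).trans_eq hgval
  exact double_convolution_estimate_general
    ((hgc.mono Set.Icc_subset_Ici_self).intervalIntegrable_of_Icc ht)
    (fun s hs => hg0 s hs.1) hmass hf.continuousOn ht hδ
end

section
/- Let t₀ ∈ ℝ, let α₁, α₂, M, k₅ be positive constants, let E, L : [t₀,∞) → ℝ be differentiable with E(t) ≥ 0 and α₁·L(t) ≤ E(t) ≤ α₂·L(t) for all t ≥ t₀, and let ξ : [t₀,∞) → ℝ be differentiable, nonincreasing, with ξ(t) > 0 for all t ≥ t₀. Suppose ξ(t)·L′(t) + 2k₅·E′(t) ≤ −M·ξ(t)·E(t) for all t ≥ t₀. Then there exist constants K > 0 and k > 0 such that E(t) ≤ K·exp(−k·∫_{t₀}^{t} ξ(s) ds) for all t ≥ t₀. -/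
open intervalIntegral

/-!
With `b = 2 k₅`, the functional `H = ξ L + b E` is comparable to `E` and formally satisfies
`H' ≤ -k ξ H`, so that `H · exp (k ∫ ξ)` should be nonincreasing. To avoid differentiating `ξ`,
freeze the weight at `ξ t`: since `L ≥ 0` and `ξ` is nonincreasing, this gives a function that
touches the product at `t`, lies above it to the right of `t` and below it to the left. The right
upper derivative of the product is therefore nonpositive and its jumps are downward, which is
enough for monotonicity.
-/

section

open Set Filter Topology

theorem le_of_liminf_slope_right_nonpos {f : ℝ → ℝ} {a b : ℝ} (hab : a ≤ b)
    (hleft : ∀ t ∈ Ioc a b, LowerSemicontinuousWithinAt f (Iio t) t)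
    (hright : ∀ t ∈ Ico a b, ∀ r > 0, ∃ᶠ s in 𝓝[>] t, slope f t s < r) :
    f b ≤ f a := by
  suffices hslope : ∀ r > 0, f b ≤ f a + r * (b - a) by
    have hlim : Tendsto (fun r : ℝ => f a + r * (b - a)) (𝓝[>] 0) (𝓝 (f a)) :=
      (Continuous.tendsto' (by fun_prop) 0 _ (by simp)).mono_left nhdsWithin_le_nhds
    exact ge_of_tendsto hlim (eventually_mem_nhdsWithin.mono hslope)
  intro r hr
  let S : Set ℝ := {t ∈ Icc a b | f t ≤ f a + r * (t - a)}
  have haS : a ∈ S := ⟨left_mem_Icc.2 hab, by simp⟩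
  have hSbdd : BddAbove S := ⟨b, fun t ht => ht.1.2⟩
  have hlub : IsLUB S (sSup S) := isLUB_csSup ⟨a, haS⟩ hSbdd
  have hsup_le : sSup S ≤ b := hlub.2 fun t ht => ht.1.2
  have hsup_mem : sSup S ∈ S := by
    by_contra hnot
    have ha_lt : a < sSup S := (hlub.1 haS).lt_of_ne fun h => hnot (h ▸ haS)
    refine hnot ⟨⟨ha_lt.le, hsup_le⟩, le_of_forall_lt fun y hy => ?_⟩
    obtain ⟨l, hl, hl_lt⟩ :=
      (mem_nhdsLT_iff_exists_Ioo_subset).1 (hleft _ ⟨ha_lt, hsup_le⟩ y hy)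
    obtain ⟨s, hs, hls, hs_le⟩ := hlub.exists_between hl
    have hs_lt : s < sSup S := hs_le.lt_of_ne fun h => hnot (h ▸ hs)
    calc y < f s := hl_lt ⟨hls, hs_lt⟩
      _ ≤ f a + r * (s - a) := hs.2
      _ ≤ f a + r * (sSup S - a) := by gcongr
  obtain hsup_eq | hsup_lt := hsup_le.eq_or_lt
  · exact hsup_eq ▸ hsup_mem.2
  · obtain ⟨s, hs_slope, hs⟩ := ((hright _ ⟨hsup_mem.1.1, hsup_lt⟩ r hr).and_eventually
      (Ioc_mem_nhdsGT hsup_lt)).exists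
    rw [slope_def_field, div_lt_iff₀ (sub_pos.2 hs.1)] at hs_slope
    have hsS : s ∈ S := ⟨⟨hsup_mem.1.1.trans hs.1.le, hs.2⟩, by linarith [hsup_mem.2]⟩
    exact absurd (hlub.1 hsS) hs.1.not_ge

theorem eventually_slope_right_lt_of_le {f g : ℝ → ℝ} {t g' r : ℝ}
    (hg : HasDerivWithinAt g g' (Ioi t) t) (hr : g' < r) (hfg : ∀ᶠ s in 𝓝[>] t, f s ≤ g s)
    (heq : f t = g t) : ∀ᶠ s in 𝓝[>] t, slope f t s < r := by
  filter_upwards [hg.limsup_slope_le' self_notMem_Ioi hr, hfg, self_mem_nhdsWithin]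
    with s hs hfgs hts
  refine lt_of_le_of_lt ?_ hs
  have hpos : 0 < s - t := sub_pos.2 hts
  rw [slope_def_field, slope_def_field, heq]
  gcongr

theorem lowerSemicontinuousWithinAt_of_le {f g : ℝ → ℝ} {s : Set ℝ} {t : ℝ}
    (hg : ContinuousWithinAt g s t) (hgf : ∀ᶠ x in 𝓝[s] t, g x ≤ f x) (heq : g t = f t) :
    LowerSemicontinuousWithinAt f s t := fun y hy => by
  have hy' : y < g t := heq ▸ hy
  filter_upwards [hg.eventually_const_lt hy', hgf] with x hx hgx
  exact hx.trans_le hgx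

section AntitoneWeight

variable {ξ : ℝ → ℝ} {a : ℝ}

theorem intervalIntegrable_of_antitoneOn_Ici (hξ : AntitoneOn ξ (Ici a)) {s t : ℝ}
    (hs : a ≤ s) (ht : a ≤ t) : IntervalIntegrable ξ MeasureTheory.volume s t :=
  (hξ.mono fun _ hx => (le_inf hs ht).trans hx.1).intervalIntegrable

theorem integral_le_add_mul_of_antitoneOn (hξ : AntitoneOn ξ (Ici a)) {t s : ℝ}
    (ht : a ≤ t) (hts : t ≤ s) : ∫ x in a..s, ξ x ≤ (∫ x in a..t, ξ x) + ξ t * (s - t) := by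
  have hint := intervalIntegrable_of_antitoneOn_Ici hξ ht (ht.trans hts)
  have hle : ∫ x in t..s, ξ x ≤ ∫ _ in t..s, ξ t :=
    integral_mono_on hts hint intervalIntegrable_const
      fun x hx => hξ ht (ht.trans hx.1) hx.1
  rw [integral_const, smul_eq_mul, mul_comm] at hle
  rw [← integral_add_adjacent_intervals
    (intervalIntegrable_of_antitoneOn_Ici hξ le_rfl ht) hint]
  gcongr

variable {L L' F F' : ℝ → ℝ} {k : ℝ}

theorem lowerSemicontinuousWithinAt_weighted_mul_exp (hξ : AntitoneOn ξ (Ici a))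
    (hL0 : ∀ t ∈ Ici a, 0 ≤ L t) (hL : ContinuousOn L (Ici a)) (hF : ContinuousOn F (Ici a))
    {t : ℝ} (ht : a < t) :
    LowerSemicontinuousWithinAt
      (fun s => (ξ s * L s + F s) * Real.exp (k * ∫ x in a..s, ξ x)) (Iio t) t := by
  have hfrozen : ContinuousWithinAt
      (fun s => (ξ t * L s + F s) * Real.exp (k * ∫ x in a..s, ξ x)) (Icc a t) t := by
    have hsub : Icc a t ⊆ Ici a := Icc_subset_Ici_self
    have hint : ContinuousOn (fun s => ∫ x in a..s, ξ x) (Icc a t) :=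
      uIcc_of_le ht.le ▸ continuousOn_primitive_interval'
        (intervalIntegrable_of_antitoneOn_Ici hξ le_rfl ht.le) left_mem_uIcc
    exact (((continuousOn_const.mul (hL.mono hsub)).add (hF.mono hsub)).mul
      (continuousOn_const.mul hint).rexp) t (right_mem_Icc.2 ht.le)
  have hnhds : Icc a t ∈ 𝓝[<] t := mem_of_superset (Ioo_mem_nhdsLT ht) Ioo_subset_Icc_self
  refine lowerSemicontinuousWithinAt_of_le (hfrozen.mono_of_mem_nhdsWithin hnhds) ?_ rfl
  filter_upwards [hnhds] with s hs
  gcongr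
  · exact hL0 s hs.1
  · exact hξ hs.1 ht.le hs.2

theorem eventually_slope_weighted_mul_exp_lt (hξ : AntitoneOn ξ (Ici a)) (hk : 0 ≤ k)
    (hL0 : ∀ t ∈ Ici a, 0 ≤ L t) (hH0 : ∀ t ∈ Ici a, 0 ≤ ξ t * L t + F t)
    {t dL dF r : ℝ} (ht : a ≤ t)
    (hL : HasDerivWithinAt L dL (Ioi t) t) (hF : HasDerivWithinAt F dF (Ioi t) t)
    (hineq : ξ t * dL + dF ≤ -k * ξ t * (ξ t * L t + F t)) (hr : 0 < r) :
    ∀ᶠ s in 𝓝[>] t,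
      slope (fun s => (ξ s * L s + F s) * Real.exp (k * ∫ x in a..s, ξ x)) t s < r := by
  let I : ℝ → ℝ := fun s => ∫ x in a..s, ξ x
  let frozen : ℝ → ℝ := fun s => (ξ t * L s + F s) * Real.exp (k * (I t + ξ t * (s - t)))
  have hderiv : HasDerivWithinAt frozen
      ((ξ t * dL + dF + k * ξ t * (ξ t * L t + F t)) * Real.exp (k * I t)) (Ioi t) t := by
    have hexp : HasDerivWithinAt (fun s => Real.exp (k * (I t + ξ t * (s - t))))
        (Real.exp (k * I t) * (k * ξ t)) (Ioi t) t := by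
      simpa using ((((hasDerivWithinAt_id t (Ioi t)).sub_const t).const_mul (ξ t)).const_add
        (I t)).const_mul k |>.exp
    refine (((hL.const_mul (ξ t)).add hF).mul hexp).congr_deriv ?_
    simp only [Pi.add_apply, sub_self, mul_zero, add_zero]
    ring
  refine eventually_slope_right_lt_of_le hderiv (lt_of_le_of_lt ?_ hr)
    (eventually_mem_nhdsWithin.mono fun s hts => ?_) (by simp [frozen, I])
  · exact mul_nonpos_of_nonpos_of_nonneg (by linarith) (Real.exp_pos _).le
  · have hs : a ≤ s := ht.trans (le_of_lt hts)
    have hweight : ξ s * L s + F s ≤ ξ t * L s + F s := by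
      gcongr
      · exact hL0 s hs
      · exact hξ ht hs (le_of_lt hts)
    have hexp : Real.exp (k * I s) ≤ Real.exp (k * (I t + ξ t * (s - t))) := by
      gcongr
      exact integral_le_add_mul_of_antitoneOn hξ ht (le_of_lt hts)
    exact mul_le_mul hweight hexp (Real.exp_pos _).le ((hH0 s hs).trans hweight)

theorem weighted_add_le_mul_exp_neg_integral (hξ : AntitoneOn ξ (Ici a)) (hk : 0 ≤ k)
    (hL0 : ∀ t ∈ Ici a, 0 ≤ L t) (hH0 : ∀ t ∈ Ici a, 0 ≤ ξ t * L t + F t)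
    (hL : ∀ t ∈ Ici a, HasDerivWithinAt L (L' t) (Ici a) t)
    (hF : ∀ t ∈ Ici a, HasDerivWithinAt F (F' t) (Ici a) t)
    (hineq : ∀ t ∈ Ici a, ξ t * L' t + F' t ≤ -k * ξ t * (ξ t * L t + F t))
    {t : ℝ} (ht : a ≤ t) :
    ξ t * L t + F t ≤ (ξ a * L a + F a) * Real.exp (-k * ∫ x in a..t, ξ x) := by
  have hle := le_of_liminf_slope_right_nonpos ht
    (f := fun s => (ξ s * L s + F s) * Real.exp (k * ∫ x in a..s, ξ x))
    (fun s hs => lowerSemicontinuousWithinAt_weighted_mul_exp hξ hL0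
      (fun x hx => (hL x hx).continuousWithinAt) (fun x hx => (hF x hx).continuousWithinAt) hs.1)
    (fun s hs r hr => by
      have hsub : Ioi s ⊆ Ici a := Ioi_subset_Ici hs.1
      exact (eventually_slope_weighted_mul_exp_lt hξ hk hL0 hH0 hs.1 ((hL s hs.1).mono hsub)
        ((hF s hs.1).mono hsub) (hineq s hs.1) hr).frequently)
  simp only [integral_same, mul_zero, Real.exp_zero, mul_one] at hle
  rwa [neg_mul, Real.exp_neg, ← div_eq_mul_inv, le_div_iff₀ (Real.exp_pos _)]

end AntitoneWeight

theorem mul_add_mul_le_div_add_mul {x x₀ l e α b : ℝ} (hα : 0 < α) (hx : 0 ≤ x) (hxx₀ : x ≤ x₀)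
    (he : 0 ≤ e) (hle : α * l ≤ e) : x * l + b * e ≤ (x₀ / α + b) * e := by
  have hl : l ≤ e / α := (le_div_iff₀' hα).2 hle
  calc x * l + b * e ≤ x * (e / α) + b * e := by gcongr
    _ ≤ x₀ * (e / α) + b * e := by gcongr
    _ = (x₀ / α + b) * e := by ring

theorem general_decay_general {a α M b : ℝ} (hα : 0 < α) (hM : 0 < M) (hb : 0 < b)
    {E L E' L' ξ : ℝ → ℝ}
    (hE : ∀ t ∈ Ici a, HasDerivWithinAt E (E' t) (Ici a) t)
    (hL : ∀ t ∈ Ici a, HasDerivWithinAt L (L' t) (Ici a) t)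
    (hL0 : ∀ t ∈ Ici a, 0 ≤ L t) (hLE : ∀ t ∈ Ici a, α * L t ≤ E t)
    (hξ : AntitoneOn ξ (Ici a)) (hξ0 : ∀ t ∈ Ici a, 0 ≤ ξ t)
    (hineq : ∀ t ∈ Ici a, ξ t * L' t + b * E' t ≤ -M * ξ t * E t) :
    ∃ K k : ℝ, 0 < K ∧ 0 < k ∧
      ∀ t, a ≤ t → E t ≤ K * Real.exp (-k * ∫ s in a..t, ξ s) := by
  have hE0 : ∀ t ∈ Ici a, 0 ≤ E t := fun t ht => (mul_nonneg hα.le (hL0 t ht)).trans (hLE t ht)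
  have hH0 : ∀ t ∈ Ici a, 0 ≤ ξ t * L t + b * E t := fun t ht =>
    add_nonneg (mul_nonneg (hξ0 t ht) (hL0 t ht)) (mul_nonneg hb.le (hE0 t ht))
  have hξa := hξ0 a self_mem_Ici
  have hHa := hH0 a self_mem_Ici
  set c := ξ a / α + b
  have hc0 : 0 < c := by positivity
  have hH : ∀ t ∈ Ici a, ξ t * L' t + b * E' t ≤ -(M / c) * ξ t * (ξ t * L t + b * E t) := by
    intro t ht
    have hk : 0 ≤ M / c * ξ t := mul_nonneg (by positivity) (hξ0 t ht)
    calc ξ t * L' t + b * E' t ≤ -M * ξ t * E t := hineq t ht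
      _ = -(M / c * ξ t * (c * E t)) := by field_simp
      _ ≤ -(M / c * ξ t * (ξ t * L t + b * E t)) := by
        gcongr
        exact mul_add_mul_le_div_add_mul hα (hξ0 t ht) (hξ self_mem_Ici ht ht) (hE0 t ht)
          (hLE t ht)
      _ = -(M / c) * ξ t * (ξ t * L t + b * E t) := by ring
  -- Adding `1` keeps `K` positive when `E` and `L` vanish at `a`.
  refine ⟨(ξ a * L a + b * E a + 1) / b, M / c, by positivity, by positivity, fun t ht => ?_⟩
  rw [div_mul_eq_mul_div, le_div_iff₀' hb]
  calc b * E t ≤ ξ t * L t + b * E t := le_add_of_nonneg_left (mul_nonneg (hξ0 t ht) (hL0 t ht))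
    _ ≤ (ξ a * L a + b * E a) * Real.exp (-(M / c) * ∫ s in a..t, ξ s) :=
      weighted_add_le_mul_exp_neg_integral hξ (by positivity) hL0 hH0 hL
        (fun s hs => (hE s hs).const_mul b) hH ht
    _ ≤ (ξ a * L a + b * E a + 1) * Real.exp (-(M / c) * ∫ s in a..t, ξ s) :=
      mul_le_mul_of_nonneg_right (lt_add_one _).le (Real.exp_pos _).le

end

/-- Abstract form of the concluding argument of the general decay theorem:
if `α₁L ≤ E ≤ α₂L`, `E ≥ 0`, `ξ > 0` differentiable nonincreasing, and
`ξ·L′ + 2k₅·E′ ≤ −M·ξ·E` on `[t₀,∞)`, then there are `K, k > 0` with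
`E(t) ≤ K·exp(−k∫_{t₀}^t ξ(s) ds)` for all `t ≥ t₀`. -/
theorem general_decay (t₀ α₁ α₂ M k₅ : ℝ) (hα₁ : 0 < α₁) (hα₂ : 0 < α₂)
    (hM : 0 < M) (hk₅ : 0 < k₅)
    (E L : ℝ → ℝ)
    (hEdiff : ∀ t, t₀ ≤ t → DifferentiableAt ℝ E t)
    (hLdiff : ∀ t, t₀ ≤ t → DifferentiableAt ℝ L t)
    (hE0 : ∀ t, t₀ ≤ t → 0 ≤ E t)
    (hEL : ∀ t, t₀ ≤ t → α₁ * L t ≤ E t ∧ E t ≤ α₂ * L t)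
    (ξ : ℝ → ℝ) (hξdiff : ∀ t, t₀ ≤ t → DifferentiableAt ℝ ξ t)
    (hξanti : AntitoneOn ξ (Set.Ici t₀)) (hξpos : ∀ t, t₀ ≤ t → 0 < ξ t)
    (hineq : ∀ t, t₀ ≤ t → ξ t * deriv L t + 2 * k₅ * deriv E t ≤ -M * ξ t * E t) :
    ∃ K k : ℝ, 0 < K ∧ 0 < k ∧
      ∀ t, t₀ ≤ t → E t ≤ K * Real.exp (-k * ∫ s in t₀..t, ξ s) :=
  general_decay_general hα₁ hM (by positivity : 0 < 2 * k₅)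
    (fun t ht => (hEdiff t ht).hasDerivAt.hasDerivWithinAt)
    (fun t ht => (hLdiff t ht).hasDerivAt.hasDerivWithinAt)
    (fun t ht => nonneg_of_mul_nonneg_right ((hE0 t ht).trans (hEL t ht).2) hα₂)
    (fun t ht => (hEL t ht).1) hξanti (fun t ht => (hξpos t ht).le) hineq
end
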